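/- Let (G,C) be a strongly connected inhomogeneous Mauldin–Williams graph in ℝ^d satisfying the SOSC with open sets (U_i)_{i∈V} and with ∫₀^∞ e^{−s₀(G)t} N_{e^{−t}}(C_i) dt < ∞ for all i ∈ V. Then for every i ∈ V, lim_{t→∞} e^{−s₀(G)t} ( N_{e^{−t}}(K_i^C) − N_{e^{−t}}(K_i^C \ [∂U_i]_{e^{−t}}) ) = 0. -/

import Mathlib

open Set Filter Topology MeasureTheory Metric

noncomputable section

/-- Points of `ℝ^d`. -/
abbrev Pt (d : ℕ) := EuclideanSpace ℝ (Fin d)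

/-- The `r`-covering number of `A ⊆ ℝ^d`: the least number of closed balls of
radius `r` needed to cover `A`. -/
noncomputable def coveringNumber {d : ℕ} (A : Set (Pt d)) (r : ℝ) : ℕ :=
  sInf {k : ℕ | ∃ c : Fin k → Pt d, A ⊆ ⋃ i, Metric.closedBall (c i) r}

/-- A Mauldin–Williams graph in `ℝ^d` over a finite directed multigraph with
vertex type `V` and edge type `E`: each vertex `i` carries a non-empty compact
set `X i` equal to the closure of its interior, and each edge `e` carries a
contractive similarity `S e` of ratio `r e ∈ (0,1)` mapping `X (term e)` into
`X (init e)`. -/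
structure MWGraph (d : ℕ) (V E : Type) [Fintype V] [Fintype E] where
  init : E → V
  term : E → V
  X : V → Set (Pt d)
  S : E → Pt d → Pt d
  r : E → ℝ
  X_nonempty : ∀ i, (X i).Nonempty
  X_compact : ∀ i, IsCompact (X i)
  X_regular : ∀ i, closure (interior (X i)) = X i
  r_pos : ∀ e, 0 < r e
  r_lt_one : ∀ e, r e < 1
  S_maps : ∀ e, Set.MapsTo (S e) (X (term e)) (X (init e))
  S_sim : ∀ e x y, dist (S e x) (S e y) = r e * dist x y

namespace MWGraph

variable {d : ℕ} {V E : Type} [Fintype V] [Fintype E]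

variable (G : MWGraph d V E)

/-- `G.IsPathFrom j γ` holds iff the list of edges `γ` is a directed path
starting at vertex `j`. -/
def IsPathFrom : V → List E → Prop
  | _, [] => True
  | j, e :: es => G.init e = j ∧ IsPathFrom (G.term e) es

/-- Terminal vertex of the path `γ` starting at `j`. -/
def pathTerm : V → List E → V
  | j, [] => j
  | _, e :: es => pathTerm (G.term e) es

/-- `S_γ = S_{e₁} ∘ ⋯ ∘ S_{eₙ}` (with `S_∅ = id`). -/
def pathMap : List E → Pt d → Pt d
  | [] => id
  | e :: es => G.S e ∘ pathMap es

/-- `r_γ = r_{e₁} ⋯ r_{eₙ}` (with `r_∅ = 1`). -/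
def pathRatio (γ : List E) : ℝ := (γ.map G.r).prod

/-- The underlying multigraph is strongly connected: for every ordered pair of
vertices there is a (non-empty) directed path from the first to the second. -/
def StronglyConnected : Prop :=
  ∀ i j : V, ∃ γ : List E, γ ≠ [] ∧ G.IsPathFrom i γ ∧ G.pathTerm i γ = j

/-- `K` is the list of graph-directed self-similar sets of `G`: the unique list
of non-empty compact sets with `K i = ⋃_{e ∈ E_i} S_e (K (term e))`. -/
def IsAttractor (K : V → Set (Pt d)) : Prop :=
  (∀ i, IsCompact (K i)) ∧ (∀ i, (K i).Nonempty) ∧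
    ∀ i, K i = ⋃ e ∈ {e : E | G.init e = i}, G.S e '' K (G.term e)

/-- `C` is an admissible list of condensation sets: compact subsets of the `X i`. -/
def IsCondensation (C : V → Set (Pt d)) : Prop :=
  ∀ i, IsCompact (C i) ∧ C i ⊆ G.X i

/-- `K` is the list of inhomogeneous graph-directed self-similar sets of `(G, C)`:
the unique list of non-empty compact sets with
`K i = ⋃_{e ∈ E_i} S_e (K (term e)) ∪ C i`. -/
def IsInhomAttractor (C : V → Set (Pt d)) (K : V → Set (Pt d)) : Prop :=
  (∀ i, IsCompact (K i)) ∧ (∀ i, (K i).Nonempty) ∧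
    ∀ i, K i = (⋃ e ∈ {e : E | G.init e = i}, G.S e '' K (G.term e)) ∪ C i

/-- `G` satisfies the open set condition with the open sets `U`. -/
def IsOSCWith (U : V → Set (Pt d)) : Prop :=
  (∀ i, (U i).Nonempty) ∧ (∀ i, IsOpen (U i)) ∧ (∀ i, Bornology.IsBounded (U i)) ∧
    (∀ i, U i ⊆ G.X i) ∧
    (∀ i, (⋃ e ∈ {e : E | G.init e = i}, G.S e '' U (G.term e)) ⊆ U i) ∧
    ∀ e e' : E, G.init e = G.init e' → e ≠ e' →
      Disjoint (G.S e '' U (G.term e)) (G.S e' '' U (G.term e'))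

/-- The set `{-log r_γ : γ a directed cycle of G}`. -/
def cycleSet : Set ℝ :=
  {x : ℝ | ∃ (j : V) (γ : List E), γ ≠ [] ∧ G.IsPathFrom j γ ∧ G.pathTerm j γ = j ∧
    x = -Real.log (G.pathRatio γ)}

/-- `G_M`, the smallest closed additive subgroup of `ℝ` containing
`{-log r_γ : γ a directed cycle}`. -/
def GM : Set ℝ := closure ((AddSubgroup.closure (G.cycleSet) : AddSubgroup ℝ) : Set ℝ)

variable [DecidableEq V]

/-- The matrix `A_G^s` with entries `(A_G^s)_{ij} = Σ_{e ∈ E_{ij}} r_e^s`. -/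
def Amatrix (s : ℝ) : Matrix V V ℝ :=
  Matrix.of fun i j => ∑ e : E, if G.init e = i ∧ G.term e = j then G.r e ^ s else 0

end MWGraph

/-- Spectral radius of a real square matrix: the largest modulus of a complex
eigenvalue. -/
noncomputable def matrixSpectralRadius {n : Type} [Fintype n] [DecidableEq n]
    (A : Matrix n n ℝ) : ℝ :=
  sSup {x : ℝ | ∃ μ : ℂ, μ ∈ spectrum ℂ (A.map (fun a : ℝ => (a : ℂ))) ∧ x = ‖μ‖}

/-- `s` is the (unique) exponent `s ≥ 0` with `ρ(A_G^s) = 1`, i.e. `s = s₀(G)`. -/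
def IsS0 {d : ℕ} {V E : Type} [Fintype V] [Fintype E] [DecidableEq V]
    (G : MWGraph d V E) (s : ℝ) : Prop :=
  0 ≤ s ∧ matrixSpectralRadius (G.Amatrix s) = 1

/-!
Within distance `e^{-t}` of `U iᶜ`, the set `K_i^C` is covered by the images under the `S_e` of the
corresponding layers of the `K_{t(e)}^C` at the coarser scale `e^{-t} / r_e`, together with `C_i`.
Normalised by a positive vector `v` with `A_G^s v ≤ v`, the scaled covering numbers of these layers
therefore satisfy a renewal inequality whose error comes from the condensation sets and tends to
zero, since an integrable scaled covering number cannot stay large. As `U i` meets `K i`, some path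
maps all of `K^C` into `U i`, a positive distance away from its complement, so that this path
contributes nothing at small scales. Losing its share of the mass turns the subinvariance of `v`
into a strict contraction, which forces the scaled layers to zero.
-/

section SpectralRadius

open scoped Matrix

theorem summable_pow_smul_of_enorm_lt_inv_spectralRadius {A : Type*} [NormedRing A]
    [NormedAlgebra ℂ A] [CompleteSpace A] (a : A) {z : ℂ} (hz : ‖z‖ₑ < (spectralRadius ℂ a)⁻¹) :
    Summable fun k : ℕ => (z • a) ^ k := by
  obtain ⟨q, hzq, hq⟩ := ENNReal.lt_iff_exists_nnreal_btwn.mp hz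
  have hq0 : 0 < q := ENNReal.coe_pos.mp (pos_of_gt hzq)
  have hcauchy := (spectrum.differentiableOn_inverse_one_sub_smul hq).hasFPowerSeriesOnBall hq0
  have hgeom := (spectrum.hasFPowerSeriesOnBall_inverse_one_sub_smul ℂ a).exchange_radius hcauchy
  have hsum := (hgeom.hasSum (y := z) (mem_eball_zero_iff.mpr hzq)).summable
  simpa [smul_pow] using hsum

variable {n : Type*} [Fintype n] [DecidableEq n]

section Norm

attribute [local instance] Matrix.linftyOpNormedRing Matrix.linftyOpNormedAlgebra

theorem summable_pow_smul_of_norm_spectrum_le_one {A : Matrix n n ℝ}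
    (hA : ∀ μ ∈ spectrum ℂ (A.map (fun a : ℝ => (a : ℂ))), ‖μ‖ ≤ 1) {z : ℝ} (hz : |z| < 1) :
    Summable fun k : ℕ => (z • A) ^ k := by
  have hradius : spectralRadius ℂ (A.map (fun a : ℝ => (a : ℂ))) ≤ 1 :=
    iSup₂_le fun μ hμ => mod_cast hA μ hμ
  have hz' : ‖(z : ℂ)‖ₑ < (spectralRadius ℂ (A.map (fun a : ℝ => (a : ℂ))))⁻¹ :=
    lt_of_lt_of_le (by rwa [← ofReal_norm, Complex.norm_real, Real.norm_eq_abs,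
      ENNReal.ofReal_lt_one]) (ENNReal.one_le_inv.mpr hradius)
  have hsum := summable_pow_smul_of_enorm_lt_inv_spectralRadius _ hz'
  have hmap (k : ℕ) : ((z : ℂ) • A.map (fun a : ℝ => (a : ℂ))) ^ k =
      ((z • A) ^ k).map (fun a : ℝ => (a : ℂ)) := by
    rw [show (z : ℂ) • A.map (fun a : ℝ => (a : ℂ)) = (z • A).map Complex.ofRealHom by
      ext; simp, ← Matrix.map_pow]
    rfl
  refine Pi.summable.mpr fun i => Pi.summable.mpr fun j => Complex.summable_ofReal.mp ?_
  exact (Pi.summable.mp (Pi.summable.mp hsum i) j).congr fun k => by rw [hmap, Matrix.map_apply]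

theorem norm_le_matrixSpectralRadius {n : Type} [Fintype n] [DecidableEq n] (A : Matrix n n ℝ)
    {μ : ℂ} (hμ : μ ∈ spectrum ℂ (A.map (fun a : ℝ => (a : ℂ)))) :
    ‖μ‖ ≤ matrixSpectralRadius A := by
  refine le_csSup ⟨‖A.map (fun a : ℝ => (a : ℂ))‖ * ‖(1 : Matrix n n ℂ)‖, ?_⟩ ⟨μ, hμ, rfl⟩
  rintro _ ⟨ν, hν, rfl⟩
  exact spectrum.norm_le_norm_mul_of_mem hν

end Norm

theorem exists_nonneg_eq_one_add_mulVec {B : Matrix n n ℝ} (hB : ∀ i j, 0 ≤ B i j)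
    (hsum : Summable fun k : ℕ => B ^ k) : ∃ y : n → ℝ, 0 ≤ y ∧ y = 1 + B *ᵥ y := by
  refine ⟨(∑' k : ℕ, B ^ k) *ᵥ 1, fun i => ?_, ?_⟩
  · refine Finset.sum_nonneg fun j _ => mul_nonneg ?_ zero_le_one
    exact (Pi.hasSum.mp (Pi.hasSum.mp hsum.hasSum i) j).nonneg fun k =>
      Matrix.pow_apply_nonneg hB k i j
  · rw [← sub_eq_iff_eq_add, Matrix.mulVec_mulVec, ← Matrix.sub_mulVec, ← one_sub_mul,
      hsum.one_sub_mul_tsum_pow, Matrix.one_mulVec]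

theorem exists_mem_stdSimplex_mulVec_le_of_summable_pow [Nonempty n] {B : Matrix n n ℝ}
    (hB : ∀ i j, 0 ≤ B i j) (hsum : Summable fun k : ℕ => B ^ k) :
    ∃ v ∈ stdSimplex ℝ n, B *ᵥ v ≤ v := by
  obtain ⟨y, hy0, hy⟩ := exists_nonneg_eq_one_add_mulVec hB hsum
  have hBy0 : 0 ≤ B *ᵥ y := fun i => Finset.sum_nonneg fun j _ => mul_nonneg (hB i j) (hy0 j)
  have hy1 : 1 ≤ y := by simpa using (add_le_add_right hBy0 1).trans_eq hy.symm
  have hBy : B *ᵥ y ≤ y := by simpa using (add_le_add_left zero_le_one (B *ᵥ y)).trans_eq hy.symm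
  have hpos : 0 < ∑ i, y i :=
    Finset.sum_pos (fun i _ => zero_lt_one.trans_le (hy1 i)) Finset.univ_nonempty
  refine ⟨(∑ i, y i)⁻¹ • y, ⟨fun i => mul_nonneg (inv_nonneg.mpr hpos.le) (hy0 i), ?_⟩, ?_⟩
  · simp only [Pi.smul_apply, smul_eq_mul, ← Finset.mul_sum, inv_mul_cancel₀ hpos.ne']
  · rw [Matrix.mulVec_smul]
    exact smul_le_smul_of_nonneg_left hBy (inv_nonneg.mpr hpos.le)

theorem exists_mem_stdSimplex_mulVec_le [Nonempty n] {A : Matrix n n ℝ} (hA : ∀ i j, 0 ≤ A i j)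
    (hspec : ∀ μ ∈ spectrum ℂ (A.map (fun a : ℝ => (a : ℂ))), ‖μ‖ ≤ 1) :
    ∃ v ∈ stdSimplex ℝ n, A *ᵥ v ≤ v := by
  obtain ⟨z, -, hz, hz1⟩ := exists_seq_strictMono_tendsto' (zero_lt_one' ℝ)
  have hsub (k : ℕ) : ∃ v ∈ stdSimplex ℝ n, (z k • A) *ᵥ v ≤ v :=
    exists_mem_stdSimplex_mulVec_le_of_summable_pow
      (fun i j => mul_nonneg (hz k).1.le (hA i j))
      (summable_pow_smul_of_norm_spectrum_le_one hspec
        (abs_lt.mpr ⟨by linarith [(hz k).1], (hz k).2⟩))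
  choose w hw hwle using hsub
  obtain ⟨v, hv, φ, hφ, hlim⟩ := (isCompact_stdSimplex ℝ n).tendsto_subseq hw
  refine ⟨v, hv, ?_⟩
  have hmulVec : Tendsto (fun k => (z (φ k) • A) *ᵥ w (φ k)) atTop (𝓝 (A *ᵥ v)) := by
    have hcont : Continuous fun p : ℝ × (n → ℝ) => (p.1 • A) *ᵥ p.2 := by fun_prop
    simpa [Function.comp_def] using
      (hcont.tendsto (1, v)).comp ((hz1.comp hφ.tendsto_atTop).prodMk_nhds hlim)
  exact le_of_tendsto_of_tendsto' hmulVec hlim fun k => hwle (φ k)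

end SpectralRadius

namespace MWGraph

open scoped Matrix

variable {d : ℕ} {V E : Type} [Fintype V] [Fintype E] (G : MWGraph d V E)

theorem Amatrix_nonneg [DecidableEq V] (s : ℝ) (i j : V) : 0 ≤ G.Amatrix s i j :=
  Finset.sum_nonneg fun e _ => by
    split_ifs
    exacts [Real.rpow_nonneg (G.r_pos e).le s, le_rfl]

theorem Amatrix_mulVec [DecidableEq V] (s : ℝ) (v : V → ℝ) (i : V) :
    (G.Amatrix s *ᵥ v) i = ∑ e with G.init e = i, G.r e ^ s * v (G.term e) := by
  simp only [Matrix.mulVec, dotProduct, Amatrix, Matrix.of_apply, Finset.sum_mul, ite_and]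
  rw [Finset.sum_comm, Finset.sum_filter]
  refine Finset.sum_congr rfl fun e _ => ?_
  split_ifs <;> simp

variable {G}

theorem IsPathFrom.pos_of_subinvariant [DecidableEq V] {s : ℝ} {v : V → ℝ} (hv0 : ∀ i, 0 ≤ v i)
    (hv : ∀ i, ∑ e with G.init e = i, G.r e ^ s * v (G.term e) ≤ v i) {γ : List E} {i : V}
    (hγ : G.IsPathFrom i γ) (hpos : 0 < v (G.pathTerm i γ)) : 0 < v i := by
  induction γ generalizing i with
  | nil => exact hpos
  | cons e γ ih =>
    obtain ⟨rfl, hγ⟩ := hγ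
    calc 0 < G.r e ^ s * v (G.term e) := mul_pos (Real.rpow_pos_of_pos (G.r_pos e) s) (ih hγ hpos)
      _ ≤ ∑ e' with G.init e' = G.init e, G.r e' ^ s * v (G.term e') :=
        Finset.single_le_sum (f := fun e' => G.r e' ^ s * v (G.term e'))
          (fun e' _ => mul_nonneg (Real.rpow_nonneg (G.r_pos e').le s) (hv0 _)) (by simp)
      _ ≤ v (G.init e) := hv _

theorem StronglyConnected.exists_pos_subinvariant [DecidableEq V] (hSC : G.StronglyConnected)
    {s : ℝ} (hs : matrixSpectralRadius (G.Amatrix s) ≤ 1) :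
    ∃ v : V → ℝ, (∀ i, 0 < v i) ∧
      ∀ i, ∑ e with G.init e = i, G.r e ^ s * v (G.term e) ≤ v i := by
  cases isEmpty_or_nonempty V with
  | inl hV => exact ⟨1, fun i => hV.elim i, fun i => hV.elim i⟩
  | inr hV =>
    obtain ⟨v, ⟨hv0, hv1⟩, hv⟩ := exists_mem_stdSimplex_mulVec_le (G.Amatrix_nonneg s)
      fun μ hμ => (norm_le_matrixSpectralRadius _ hμ).trans hs
    have hsub : ∀ i, ∑ e with G.init e = i, G.r e ^ s * v (G.term e) ≤ v i := fun i =>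
      (G.Amatrix_mulVec s v i).symm.trans_le (hv i)
    obtain ⟨j, -, hj⟩ : ∃ j ∈ Finset.univ, 0 < v j :=
      Finset.exists_lt_of_sum_lt (by simp [hv1])
    refine ⟨v, fun i => ?_, hsub⟩
    obtain ⟨γ, -, hγ, rfl⟩ := hSC i j
    exact hγ.pos_of_subinvariant hv0 hsub hj

end MWGraph

theorem exists_mem_Ioo_forall_le {ι : Type*} [Finite ι] {f : ι → ℝ} {a b : ℝ} (hab : a < b)
    (hf : ∀ i, f i < b) : ∃ c ∈ Ioo a b, ∀ i, f i ≤ c := by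
  have hle : ∀ᶠ c in 𝓝[<] b, ∀ i, f i ≤ c :=
    eventually_all.mpr fun i => eventually_nhdsWithin_of_eventually_nhds (eventually_ge_nhds (hf i))
  obtain ⟨c, hfc, hc⟩ := (hle.and (Ioo_mem_nhdsLT hab)).exists
  exact ⟨c, hc, hfc⟩

section Renewal

variable {E : Type*} [SeminormedAddCommGroup E] {f : ℝ → E} {b θ : ℝ}

theorem exists_eventually_norm_le_of_renewal (hθ1 : θ < 1) (hb : 0 < b)
    (hloc : ∀ x y, ∃ M, ∀ u ∈ Icc x y, ‖f u‖ ≤ M)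
    (hrec : ∀ κ > 0, ∀ τ, ∀ᶠ t in atTop, ∀ M ≥ 0,
      (∀ u ∈ Icc τ (t - b), ‖f u‖ ≤ M) → ‖f t‖ ≤ θ * M + κ) :
    ∃ M ≥ 0, ∀ᶠ t in atTop, ‖f t‖ ≤ M := by
  obtain ⟨T, hT⟩ := (hrec 1 one_pos 0).exists_forall_of_atTop
  obtain ⟨M₀, hM₀⟩ := hloc 0 T
  set M := max M₀ (1 - θ)⁻¹
  have hM0 : 0 ≤ M := le_max_of_le_right (inv_nonneg.mpr (sub_nonneg.mpr hθ1.le))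
  have hM : θ * M + 1 ≤ M := by
    have : 1 ≤ (1 - θ) * M :=
      (inv_le_iff_one_le_mul₀' (sub_pos.mpr hθ1)).mp (le_max_right M₀ (1 - θ)⁻¹)
    linarith
  have hstep (k : ℕ) : ∀ u ∈ Icc 0 (T + k * b), ‖f u‖ ≤ M := by
    induction k with
    | zero => exact fun u hu => (hM₀ u (by simpa using hu)).trans (le_max_left _ _)
    | succ k ih =>
      rintro t ⟨ht0, ht⟩
      push_cast at ht
      rcases le_total T t with hTt | hTt
      · exact (hT t hTt M hM0 fun u hu => ih u ⟨hu.1, by linarith [hu.2]⟩).trans hM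
      · exact ih t ⟨ht0, by nlinarith [k.cast_nonneg (α := ℝ)]⟩
  refine ⟨M, hM0, (eventually_ge_atTop 0).mono fun t ht => ?_⟩
  obtain ⟨k, hk⟩ := exists_nat_ge ((t - T) / b)
  exact hstep k t ⟨ht, by linarith [(div_le_iff₀ hb).mp hk]⟩

theorem tendsto_zero_of_renewal (hθ0 : 0 ≤ θ) (hθ1 : θ < 1) (hb : 0 < b)
    (hloc : ∀ x y, ∃ M, ∀ u ∈ Icc x y, ‖f u‖ ≤ M)
    (hrec : ∀ κ > 0, ∀ τ, ∀ᶠ t in atTop, ∀ M ≥ 0,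
      (∀ u ∈ Icc τ (t - b), ‖f u‖ ≤ M) → ‖f t‖ ≤ θ * M + κ) :
    Tendsto f atTop (𝓝 0) := by
  obtain ⟨M, hM0, hM⟩ := exists_eventually_norm_le_of_renewal hθ1 hb hloc hrec
  have hM' : ∀ᶠ t in atTop, ‖f t‖ < M + 1 := hM.mono fun t ht => by linarith
  set q := (1 + θ) / 2
  have hq (n : ℕ) : 0 < q ^ n * (M + 1) := by positivity
  have hq1 : q < 1 := by simp only [q]; linarith
  have hdecay (n : ℕ) : ∀ᶠ t in atTop, ‖f t‖ ≤ q ^ n * (M + 1) := by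
    induction n with
    | zero => simpa using hM'.mono fun t ht => ht.le
    | succ n ih =>
      obtain ⟨τ, hτ⟩ := ih.exists_forall_of_atTop
      have hκ : 0 < (q - θ) * (q ^ n * (M + 1)) :=
        mul_pos (by simp only [q]; linarith) (hq n)
      filter_upwards [hrec _ hκ τ] with t ht
      calc ‖f t‖ ≤ θ * (q ^ n * (M + 1)) + (q - θ) * (q ^ n * (M + 1)) :=
            ht _ (hq n).le fun u hu => hτ u hu.1
        _ = q ^ (n + 1) * (M + 1) := by ring
  refine Metric.tendsto_nhds.mpr fun ε hε => ?_
  obtain ⟨n, hn⟩ := exists_pow_lt_of_lt_one (show 0 < ε / (M + 1) by positivity) hq1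
  filter_upwards [hdecay n] with t ht
  rw [dist_zero_right]
  exact ht.trans_lt ((lt_div_iff₀ (by positivity)).mp hn)

end Renewal

section Lintegral

open scoped ENNReal

theorem tendsto_setLIntegral_Ioi_atTop {f : ℝ → ℝ≥0∞} (hf : ∫⁻ t in Ioi 0, f t ≠ ⊤) :
    Tendsto (fun u => ∫⁻ t in Ioi u, f t) atTop (𝓝 0) := by
  have hempty : ⋂ u : ℝ, Ioi u = ∅ :=
    eq_empty_of_forall_notMem fun x hx => lt_irrefl x (mem_iInter.mp hx x)
  set ν := (volume.restrict (Ioi 0)).withDensity f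
  have hν : Tendsto (fun u => ν (Ioi u)) atTop (𝓝 (ν (⋂ u, Ioi u))) :=
    tendsto_measure_iInter_atTop (fun u => measurableSet_Ioi.nullMeasurableSet) antitone_Ioi
      ⟨0, by simpa [ν, withDensity_apply] using hf⟩
  rw [hempty, measure_empty] at hν
  refine hν.congr' ((eventually_ge_atTop 0).mono fun u hu => ?_)
  rw [withDensity_apply _ measurableSet_Ioi, Measure.restrict_restrict measurableSet_Ioi,
    Ioi_inter_Ioi, sup_of_le_left hu]

theorem tendsto_zero_of_setLIntegral_Ioi_ne_top {f : ℝ → ℝ≥0∞} {c : ℝ≥0∞} (hc : c ≠ ⊤)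
    (hf : ∫⁻ t in Ioi 0, f t ≠ ⊤) (hfc : ∀ u, ∀ t ∈ Ioc u (u + 1), f u ≤ c * f t) :
    Tendsto f atTop (𝓝 0) := by
  have hbound (u : ℝ) : f u ≤ c * ∫⁻ t in Ioi u, f t :=
    calc f u = ∫⁻ _ in Ioc u (u + 1), f u := by simp
      _ ≤ ∫⁻ t in Ioc u (u + 1), c * f t := setLIntegral_mono' measurableSet_Ioc (hfc u)
      _ = c * ∫⁻ t in Ioc u (u + 1), f t := lintegral_const_mul' _ _ hc
      _ ≤ c * ∫⁻ t in Ioi u, f t := by gcongr; exact Ioc_subset_Ioi_self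
  have htail : Tendsto (fun u => c * ∫⁻ t in Ioi u, f t) atTop (𝓝 0) := by
    simpa using ENNReal.Tendsto.const_mul (tendsto_setLIntegral_Ioi_atTop hf) (.inr hc)
  exact tendsto_of_tendsto_of_tendsto_of_le_of_le tendsto_const_nhds htail (fun _ => zero_le) hbound

end Lintegral

section Similarity

variable {α β : Type*} [PseudoMetricSpace α] [PseudoMetricSpace β] {ρ : ℝ} {f : α → β}

theorem infEDist_image_of_dist_eq_mul (hρ : 0 < ρ) (hf : ∀ x y, dist (f x) (f y) = ρ * dist x y)
    (x : α) (s : Set α) : infEDist (f x) (f '' s) = ENNReal.ofReal ρ * infEDist x s := by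
  have hedist (y : α) : edist (f x) (f y) = ENNReal.ofReal ρ * edist x y := by
    rw [edist_dist, edist_dist, hf, ENNReal.ofReal_mul hρ.le]
  simp only [infEDist, iInf_image, hedist,
    ENNReal.mul_iInf_of_ne (ENNReal.ofReal_ne_zero_iff.mpr hρ) ENNReal.ofReal_ne_top]

theorem preimage_cthickening_of_dist_eq_mul (hρ : 0 < ρ)
    (hf : ∀ x y, dist (f x) (f y) = ρ * dist x y) (hsurj : Function.Surjective f) (δ : ℝ)
    (s : Set β) : f ⁻¹' cthickening δ s = cthickening (δ / ρ) (f ⁻¹' s) := by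
  ext x
  have hρ' : ENNReal.ofReal ρ ≠ 0 := ENNReal.ofReal_ne_zero_iff.mpr hρ
  rw [mem_preimage, mem_cthickening_iff, mem_cthickening_iff, ENNReal.ofReal_div_of_pos hρ,
    ENNReal.le_div_iff_mul_le (.inl hρ') (.inl ENNReal.ofReal_ne_top), mul_comm,
    ← infEDist_image_of_dist_eq_mul hρ hf, image_preimage_eq s hsurj]

theorem surjective_of_dist_eq_mul {F : Type*} [NormedAddCommGroup F] [NormedSpace ℝ F]
    [StrictConvexSpace ℝ F] [FiniteDimensional ℝ F] {ρ : ℝ} (hρ : 0 < ρ) {f : F → F}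
    (hf : ∀ x y, dist (f x) (f y) = ρ * dist x y) : Function.Surjective f := by
  have hiso : Isometry fun x => ρ⁻¹ • f x := Isometry.of_dist_eq fun x y => by
    rw [dist_smul₀, hf, Real.norm_of_nonneg (inv_nonneg.mpr hρ.le), inv_mul_cancel_left₀ hρ.ne']
  have : Inhabited F := ⟨0⟩
  intro y
  obtain ⟨x, hx⟩ := (hiso.affineIsometryOfStrictConvexSpace.toAffineIsometryEquiv rfl).surjective
    (ρ⁻¹ • y)
  exact ⟨x, smul_right_injective _ (inv_ne_zero hρ.ne') (by simpa using hx)⟩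

end Similarity

section CoveringNumber

variable {d : ℕ} {A B : Set (Pt d)} {r : ℝ}

theorem coveringNumber_le_card {ι : Type*} [Fintype ι] (c : ι → Pt d)
    (h : A ⊆ ⋃ i, closedBall (c i) r) : coveringNumber A r ≤ Fintype.card ι :=
  Nat.sInf_le ⟨fun k => c ((Fintype.equivFin ι).symm k), by
    rwa [(Fintype.equivFin ι).symm.surjective.iUnion_comp fun i => closedBall (c i) r]⟩

theorem exists_subset_iUnion_closedBall (hA : Bornology.IsBounded A) (hr : 0 < r) :
    ∃ c : Fin (coveringNumber A r) → Pt d, A ⊆ ⋃ i, closedBall (c i) r := by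
  obtain ⟨t, -, ht, hcov⟩ := finite_cover_balls_of_compact hA.isCompact_closure hr
  have := ht.fintype
  refine Nat.sInf_mem (s := {k | ∃ c : Fin k → Pt d, A ⊆ ⋃ i, closedBall (c i) r})
    ⟨Fintype.card t, fun k => (Fintype.equivFin t).symm k, ?_⟩
  rw [(Fintype.equivFin t).symm.surjective.iUnion_comp fun x : t => closedBall (x : Pt d) r]
  refine subset_closure.trans (hcov.trans ?_)
  rw [biUnion_eq_iUnion]
  exact iUnion_mono fun _ => ball_subset_closedBall

theorem coveringNumber_mono (hAB : A ⊆ B) (hB : Bornology.IsBounded B) (hr : 0 < r) :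
    coveringNumber A r ≤ coveringNumber B r := by
  obtain ⟨c, hc⟩ := exists_subset_iUnion_closedBall hB hr
  simpa using coveringNumber_le_card c (hAB.trans hc)

theorem coveringNumber_anti {r' : ℝ} (hA : Bornology.IsBounded A) (hr : 0 < r) (h : r ≤ r') :
    coveringNumber A r' ≤ coveringNumber A r := by
  obtain ⟨c, hc⟩ := exists_subset_iUnion_closedBall hA hr
  simpa using coveringNumber_le_card c
    (hc.trans (iUnion_mono fun i => closedBall_subset_closedBall h))

theorem coveringNumber_union_le (hA : Bornology.IsBounded A) (hB : Bornology.IsBounded B)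
    (hr : 0 < r) : coveringNumber (A ∪ B) r ≤ coveringNumber A r + coveringNumber B r := by
  obtain ⟨a, ha⟩ := exists_subset_iUnion_closedBall hA hr
  obtain ⟨b, hb⟩ := exists_subset_iUnion_closedBall hB hr
  have hcov : A ∪ B ⊆ ⋃ i, closedBall (Sum.elim a b i) r := by
    rw [iUnion_sum]
    exact union_subset_union ha hb
  simpa using coveringNumber_le_card _ hcov

theorem coveringNumber_empty : coveringNumber (∅ : Set (Pt d)) r = 0 := by
  simpa using coveringNumber_le_card (Fin.elim0 : Fin 0 → Pt d) (empty_subset _)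

theorem coveringNumber_image_le {ρ : ℝ} {f : Pt d → Pt d} (hρ : 0 < ρ)
    (hf : ∀ x y, dist (f x) (f y) = ρ * dist x y) (hA : Bornology.IsBounded A) (hr : 0 < r) :
    coveringNumber (f '' A) r ≤ coveringNumber A (r / ρ) := by
  obtain ⟨c, hc⟩ := exists_subset_iUnion_closedBall hA (div_pos hr hρ)
  have hcov : f '' A ⊆ ⋃ i, closedBall (f (c i)) r := by
    rintro _ ⟨x, hx, rfl⟩
    obtain ⟨i, hi⟩ := mem_iUnion.mp (hc hx)
    refine mem_iUnion.mpr ⟨i, ?_⟩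
    rw [mem_closedBall, hf]
    exact (le_div_iff₀' hρ).mp hi
  simpa using coveringNumber_le_card _ hcov

end CoveringNumber

section ScaledCoveringNumber

theorem exp_neg_div_eq_exp_neg_add_log {ρ : ℝ} (hρ : 0 < ρ) (t : ℝ) :
    Real.exp (-t) / ρ = Real.exp (-(t + Real.log ρ)) := by
  rw [neg_add, Real.exp_add, Real.exp_neg (Real.log ρ), Real.exp_log hρ, div_eq_mul_inv]

variable {d : ℕ} {A B : Set (Pt d)}

/-- The scaled covering number `e^{-st} N_{e^{-t}}(A)` at logarithmic scale `t`. -/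
def scaledCoveringNumber (s : ℝ) (A : Set (Pt d)) (t : ℝ) : ℝ :=
  Real.exp (-s * t) * coveringNumber A (Real.exp (-t))

variable {s : ℝ} (t : ℝ)

theorem scaledCoveringNumber_nonneg : 0 ≤ scaledCoveringNumber s A t := by
  unfold scaledCoveringNumber
  positivity

theorem scaledCoveringNumber_empty : scaledCoveringNumber s (∅ : Set (Pt d)) t = 0 := by
  simp [scaledCoveringNumber, coveringNumber_empty]

theorem scaledCoveringNumber_mono (hAB : A ⊆ B) (hB : Bornology.IsBounded B) :
    scaledCoveringNumber s A t ≤ scaledCoveringNumber s B t := by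
  unfold scaledCoveringNumber
  gcongr
  exact coveringNumber_mono hAB hB (Real.exp_pos _)

theorem scaledCoveringNumber_union_le (hA : Bornology.IsBounded A) (hB : Bornology.IsBounded B) :
    scaledCoveringNumber s (A ∪ B) t ≤ scaledCoveringNumber s A t + scaledCoveringNumber s B t := by
  unfold scaledCoveringNumber
  rw [← mul_add]
  gcongr
  exact_mod_cast coveringNumber_union_le hA hB (Real.exp_pos _)

theorem scaledCoveringNumber_biUnion_le {ι : Type*} (I : Finset ι) (F : ι → Set (Pt d))
    (hF : ∀ i, Bornology.IsBounded (F i)) :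
    scaledCoveringNumber s (⋃ i ∈ I, F i) t ≤ ∑ i ∈ I, scaledCoveringNumber s (F i) t := by
  classical
  induction I using Finset.induction_on with
  | empty => simp [scaledCoveringNumber_empty]
  | insert i I hi ih =>
    rw [Finset.set_biUnion_insert, Finset.sum_insert hi]
    refine (scaledCoveringNumber_union_le t (hF i)
      ((Bornology.isBounded_biUnion_finset I).mpr fun j _ => hF j)).trans ?_
    gcongr

theorem scaledCoveringNumber_image_le {ρ : ℝ} {f : Pt d → Pt d} (hρ : 0 < ρ)
    (hf : ∀ x y, dist (f x) (f y) = ρ * dist x y) (hA : Bornology.IsBounded A) :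
    scaledCoveringNumber s (f '' A) t ≤ ρ ^ s * scaledCoveringNumber s A (t + Real.log ρ) := by
  have hscale : Real.exp (-s * t) = ρ ^ s * Real.exp (-s * (t + Real.log ρ)) := by
    rw [Real.rpow_def_of_pos hρ, ← Real.exp_add]
    ring_nf
  rw [scaledCoveringNumber, scaledCoveringNumber, ← mul_assoc, ← hscale,
    ← exp_neg_div_eq_exp_neg_add_log hρ t]
  gcongr
  exact coveringNumber_image_le hρ hf hA (Real.exp_pos _)

theorem exists_scaledCoveringNumber_le_on_Icc (s : ℝ) (hA : Bornology.IsBounded A) (x y : ℝ) :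
    ∃ M, ∀ u ∈ Icc x y, scaledCoveringNumber s A u ≤ M := by
  obtain ⟨c, hc⟩ := isCompact_Icc.bddAbove_image
    (show ContinuousOn (fun u => Real.exp (-s * u)) (Icc x y) by fun_prop)
  refine ⟨c * coveringNumber A (Real.exp (-y)), fun u hu => ?_⟩
  have hcu : Real.exp (-s * u) ≤ c := hc (mem_image_of_mem _ hu)
  unfold scaledCoveringNumber
  gcongr
  · exact (Real.exp_pos _).le.trans hcu
  · exact coveringNumber_anti hA (Real.exp_pos _) (Real.exp_le_exp.mpr (neg_le_neg hu.2))

theorem tendsto_scaledCoveringNumber_of_lintegral_lt_top (hA : Bornology.IsBounded A)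
    (hint : ∫⁻ t in Ioi 0, ENNReal.ofReal (scaledCoveringNumber s A t) < ⊤) :
    Tendsto (scaledCoveringNumber s A) atTop (𝓝 0) := by
  have hcomp (u : ℝ) : ∀ t ∈ Ioc u (u + 1),
      scaledCoveringNumber s A u ≤ Real.exp |s| * scaledCoveringNumber s A t := by
    intro t ht
    unfold scaledCoveringNumber
    rw [← mul_assoc, ← Real.exp_add]
    gcongr ?_ * ?_
    · have : s * (t - u) ≤ |s| * 1 := by
        gcongr
        exacts [sub_nonneg.mpr ht.1.le, le_abs_self s, by linarith [ht.2]]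
      exact Real.exp_le_exp.mpr (by linarith)
    · exact_mod_cast coveringNumber_anti hA (Real.exp_pos _)
        (Real.exp_le_exp.mpr (neg_le_neg ht.1.le))
  have hlim := tendsto_zero_of_setLIntegral_Ioi_ne_top ENNReal.ofReal_ne_top hint.ne
    fun u t ht => (ENNReal.ofReal_le_ofReal (hcomp u t ht)).trans_eq
      (ENNReal.ofReal_mul (Real.exp_pos _).le)
  simpa [Function.comp_def, ENNReal.toReal_ofReal (scaledCoveringNumber_nonneg _)] using
    (ENNReal.tendsto_toReal ENNReal.zero_ne_top).comp hlim

end ScaledCoveringNumber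

section Layer

variable {d : ℕ} {A B W W' : Set (Pt d)} {s : ℝ}

/-- The scaled covering number of the part of `A` within `e^{-t}` of the complement of `W`. Since
`∂W ⊆ Wᶜ` for open `W`, this part contains `A ∩ [∂W]_{e^{-t}}`; measuring the distance to `Wᶜ`
rather than to `∂W` makes it antitone in `W`. -/
def layerCount (s : ℝ) (A W : Set (Pt d)) (t : ℝ) : ℝ :=
  scaledCoveringNumber s (A ∩ cthickening (Real.exp (-t)) Wᶜ) t

theorem layerCount_nonneg (t : ℝ) : 0 ≤ layerCount s A W t :=
  scaledCoveringNumber_nonneg t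

theorem layerCount_le_scaledCoveringNumber (hA : Bornology.IsBounded A) (t : ℝ) :
    layerCount s A W t ≤ scaledCoveringNumber s A t :=
  scaledCoveringNumber_mono t inter_subset_left hA

theorem layerCount_anti (hA : Bornology.IsBounded A) (hW : W ⊆ W') (t : ℝ) :
    layerCount s A W' t ≤ layerCount s A W t :=
  scaledCoveringNumber_mono t
    (inter_subset_inter_right A (cthickening_subset_of_subset _ (compl_subset_compl.mpr hW)))
    (hA.subset inter_subset_left)

theorem layerCount_union_le (hA : Bornology.IsBounded A) (hB : Bornology.IsBounded B) (t : ℝ) :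
    layerCount s (A ∪ B) W t ≤ layerCount s A W t + layerCount s B W t := by
  unfold layerCount
  rw [union_inter_distrib_right]
  exact scaledCoveringNumber_union_le t (hA.subset inter_subset_left) (hB.subset inter_subset_left)

theorem layerCount_biUnion_le {ι : Type*} (I : Finset ι) (F : ι → Set (Pt d))
    (hF : ∀ i, Bornology.IsBounded (F i)) (t : ℝ) :
    layerCount s (⋃ i ∈ I, F i) W t ≤ ∑ i ∈ I, layerCount s (F i) W t := by
  unfold layerCount
  rw [iUnion₂_inter]
  exact scaledCoveringNumber_biUnion_le t I _ fun i => (hF i).subset inter_subset_left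

theorem layerCount_image_le {ρ : ℝ} {f : Pt d → Pt d} (hρ : 0 < ρ)
    (hf : ∀ x y, dist (f x) (f y) = ρ * dist x y) (hA : Bornology.IsBounded A) (t : ℝ) :
    layerCount s (f '' A) W t ≤ ρ ^ s * layerCount s A (f ⁻¹' W) (t + Real.log ρ) := by
  unfold layerCount
  rw [← image_inter_preimage, preimage_cthickening_of_dist_eq_mul hρ hf
    (surjective_of_dist_eq_mul hρ hf), preimage_compl, exp_neg_div_eq_exp_neg_add_log hρ t]
  exact scaledCoveringNumber_image_le t hρ hf (hA.subset inter_subset_left)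

theorem eventually_layerCount_eq_zero (hA : IsCompact A) (hW : IsOpen W) (hAW : A ⊆ W) :
    ∀ᶠ t in atTop, layerCount s A W t = 0 := by
  obtain ⟨δ, hδ, hdisj⟩ :=
    (disjoint_compl_right_iff_subset.mpr hAW).exists_cthickenings hA hW.isClosed_compl
  have hsmall : ∀ᶠ t in atTop, Real.exp (-t) < δ :=
    (Real.tendsto_exp_neg_atTop_nhds_zero).eventually_lt_const hδ
  filter_upwards [hsmall] with t ht
  have hempty : A ∩ cthickening (Real.exp (-t)) Wᶜ = ∅ := disjoint_iff_inter_eq_empty.mp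
    (hdisj.mono (self_subset_cthickening A) (cthickening_mono ht.le _))
  rw [layerCount, hempty, scaledCoveringNumber_empty]

end Layer

namespace MWGraph

variable {d : ℕ} {V E : Type} [Fintype V] [Fintype E] {G : MWGraph d V E}
  {C K KC U : V → Set (Pt d)}

section Path

theorem lipschitzWith_S (e : E) : LipschitzWith (G.r e).toNNReal (G.S e) :=
  .of_dist_le' fun x y => (G.S_sim e x y).le

theorem dist_pathMap (γ : List E) (x y : Pt d) :
    dist (G.pathMap γ x) (G.pathMap γ y) = G.pathRatio γ * dist x y := by
  induction γ with
  | nil => simp [pathMap, pathRatio]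
  | cons e γ ih => simp [pathMap, pathRatio, G.S_sim, ih, mul_assoc]

theorem pathRatio_pos (γ : List E) : 0 < G.pathRatio γ :=
  List.prod_pos fun _ hr => by
    obtain ⟨e, -, rfl⟩ := List.mem_map.mp hr
    exact G.r_pos e

theorem pathRatio_cons_rpow (e : E) (γ : List E) (s : ℝ) :
    G.pathRatio (e :: γ) ^ s = G.r e ^ s * G.pathRatio γ ^ s := by
  rw [← Real.mul_rpow (G.r_pos e).le (pathRatio_pos γ).le]
  simp [pathRatio]

theorem pathRatio_le_pow {q : ℝ} (hq : ∀ e, G.r e ≤ q) (γ : List E) :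
    G.pathRatio γ ≤ q ^ γ.length :=
  (List.prod_map_le_prod_map₀ G.r (fun _ => q) (fun e _ => (G.r_pos e).le) fun e _ => hq e).trans_eq
    (by simp)

theorem IsAttractor.exists_mem_image_pathMap (hK : G.IsAttractor K) (n : ℕ) {i : V} {x : Pt d}
    (hx : x ∈ K i) : ∃ γ : List E, γ.length = n ∧ G.IsPathFrom i γ ∧
      x ∈ G.pathMap γ '' K (G.pathTerm i γ) := by
  induction n generalizing i x with
  | zero => exact ⟨[], rfl, trivial, x, hx, rfl⟩
  | succ n ih =>
    rw [hK.2.2 i] at hx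
    obtain ⟨e, he, y, hy, rfl⟩ := mem_iUnion₂.mp hx
    obtain ⟨γ, hlen, hγ, hyγ⟩ := ih hy
    refine ⟨e :: γ, by simp [hlen], ⟨he, hγ⟩, ?_⟩
    rw [pathMap, image_comp]
    exact mem_image_of_mem _ hyγ

theorem IsAttractor.exists_image_pathMap_subset (hK : G.IsAttractor K) {B : V → Set (Pt d)}
    (hB : ∀ j, Bornology.IsBounded (B j)) {i : V} {W : Set (Pt d)} (hW : IsOpen W)
    (hWK : (W ∩ K i).Nonempty) :
    ∃ γ : List E, G.IsPathFrom i γ ∧ G.pathMap γ '' B (G.pathTerm i γ) ⊆ W := by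
  obtain ⟨x, hxW, hxK⟩ := hWK
  obtain ⟨ε, hε, hball⟩ := Metric.isOpen_iff.mp hW x hxW
  obtain ⟨D, hD0, hD⟩ : ∃ D > 0, ∀ y ∈ ⋃ j, (K j ∪ B j), ∀ z ∈ ⋃ j, (K j ∪ B j), dist y z ≤ D := by
    have hbdd : Bornology.IsBounded (⋃ j, (K j ∪ B j)) :=
      Bornology.isBounded_iUnion.mpr fun j => (hK.1 j).isBounded.union (hB j)
    obtain ⟨D, hD⟩ := Metric.isBounded_iff.mp hbdd
    exact ⟨max D 1, lt_max_of_lt_right one_pos,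
      fun y hy z hz => (hD hy hz).trans (le_max_left _ _)⟩
  obtain ⟨q, ⟨hq0, hq1⟩, hq⟩ := exists_mem_Ioo_forall_le one_pos G.r_lt_one
  obtain ⟨n, hn⟩ := exists_pow_lt_of_lt_one (div_pos hε hD0) hq1
  obtain ⟨γ, hlen, hγ, z, hz, rfl⟩ := hK.exists_mem_image_pathMap n hxK
  refine ⟨γ, hγ, image_subset_iff.mpr fun y hy => hball ?_⟩
  have hyz : dist y z ≤ D :=
    hD y (mem_iUnion.mpr ⟨_, .inr hy⟩) z (mem_iUnion.mpr ⟨_, .inl hz⟩)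
  calc dist (G.pathMap γ y) (G.pathMap γ z) = G.pathRatio γ * dist y z := dist_pathMap γ y z
    _ ≤ q ^ n * D := by
      rw [← hlen]
      exact mul_le_mul (pathRatio_le_pow hq γ) hyz dist_nonneg (by positivity)
    _ < ε := (lt_div_iff₀ hD0).mp hn

end Path

section Renewal

variable [DecidableEq V] {s : ℝ} {v : V → ℝ} {b : ℝ}

theorem IsInhomAttractor.layerCount_le (hKC : G.IsInhomAttractor C KC) (i : V) (W : Set (Pt d))
    (t : ℝ) : layerCount s (KC i) W t ≤ scaledCoveringNumber s (C i) t + ∑ e with G.init e = i,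
      G.r e ^ s * layerCount s (KC (G.term e)) (G.S e ⁻¹' W) (t + Real.log (G.r e)) := by
  have hKCi : KC i = C i ∪ ⋃ e ∈ Finset.univ.filter (G.init · = i), G.S e '' KC (G.term e) := by
    simpa [union_comm] using hKC.2.2 i
  have hbdd (j : V) : Bornology.IsBounded (KC j) := (hKC.1 j).isBounded
  have hedge (e : E) : Bornology.IsBounded (G.S e '' KC (G.term e)) :=
    (lipschitzWith_S e).isBounded_image (hbdd _)
  have hC : Bornology.IsBounded (C i) := (hbdd i).subset (hKCi ▸ subset_union_left)
  calc layerCount s (KC i) W t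
      = layerCount s (C i ∪ ⋃ e ∈ Finset.univ.filter (G.init · = i), G.S e '' KC (G.term e)) W t :=
        congrArg (layerCount s · W t) hKCi
    _ ≤ layerCount s (C i) W t + ∑ e with G.init e = i,
          layerCount s (G.S e '' KC (G.term e)) W t :=
        (layerCount_union_le hC ((Bornology.isBounded_biUnion_finset _).mpr fun e _ => hedge e)
          t).trans (by gcongr; exact layerCount_biUnion_le _ _ hedge t)
    _ ≤ _ := by
        gcongr with e
        · exact layerCount_le_scaledCoveringNumber hC t
        · exact layerCount_image_le (G.r_pos e) (G.S_sim e) (hbdd _) t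

theorem IsInhomAttractor.layerCount_init_le (hKC : G.IsInhomAttractor C KC)
    (hU : ∀ e, MapsTo (G.S e) (U (G.term e)) (U (G.init e)))
    (hv : ∀ i, ∑ e with G.init e = i, G.r e ^ s * v (G.term e) ≤ v i) {M t : ℝ} (hM : 0 ≤ M)
    (ht : ∀ e, layerCount s (KC (G.term e)) (U (G.term e)) (t + Real.log (G.r e)) ≤
      M * v (G.term e)) (e₀ : E) {W : Set (Pt d)} (hW : U (G.init e₀) ⊆ W) :
    layerCount s (KC (G.init e₀)) W t ≤ scaledCoveringNumber s (C (G.init e₀)) t +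
      (M * (v (G.init e₀) - G.r e₀ ^ s * v (G.term e₀)) + G.r e₀ ^ s *
        layerCount s (KC (G.term e₀)) (G.S e₀ ⁻¹' W) (t + Real.log (G.r e₀))) := by
  classical
  set L : E → ℝ := fun e =>
    G.r e ^ s * layerCount s (KC (G.term e)) (G.S e ⁻¹' W) (t + Real.log (G.r e))
  set I := Finset.univ.filter fun e => G.init e = G.init e₀
  have he₀ : e₀ ∈ I := by simp [I]
  have hL : ∀ e ∈ I.erase e₀, L e ≤ M * (G.r e ^ s * v (G.term e)) := by
    intro e he
    have hinit : G.init e = G.init e₀ := by simpa [I] using Finset.mem_of_mem_erase he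
    have hsub : U (G.term e) ⊆ G.S e ⁻¹' W := fun x hx => hW (hinit ▸ hU e hx)
    have := (layerCount_anti (s := s) (hKC.1 _).isBounded hsub _).trans (ht e)
    calc L e ≤ G.r e ^ s * (M * v (G.term e)) :=
          mul_le_mul_of_nonneg_left this (Real.rpow_nonneg (G.r_pos e).le s)
      _ = M * (G.r e ^ s * v (G.term e)) := by ring
  have hv' : ∑ e ∈ I.erase e₀, G.r e ^ s * v (G.term e) ≤
      v (G.init e₀) - G.r e₀ ^ s * v (G.term e₀) := by
    rw [le_sub_iff_add_le, Finset.sum_erase_add _ _ he₀]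
    exact hv (G.init e₀)
  calc layerCount s (KC (G.init e₀)) W t
      ≤ scaledCoveringNumber s (C (G.init e₀)) t + (∑ e ∈ I.erase e₀, L e + L e₀) := by
        rw [Finset.sum_erase_add _ _ he₀]
        exact hKC.layerCount_le _ W t
    _ ≤ _ := by
        gcongr
        calc ∑ e ∈ I.erase e₀, L e ≤ M * ∑ e ∈ I.erase e₀, G.r e ^ s * v (G.term e) :=
              (Finset.sum_le_sum hL).trans_eq (Finset.mul_sum _ _ _).symm
          _ ≤ _ := mul_le_mul_of_nonneg_left hv' hM

/-- Along a path into `W` the layer vanishes at small scales, so the mass of that path is saved. -/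
theorem IsInhomAttractor.eventually_layerCount_le (hKC : G.IsInhomAttractor C KC)
    (hU : ∀ e, MapsTo (G.S e) (U (G.term e)) (U (G.init e)))
    (hF : ∀ j, Tendsto (scaledCoveringNumber s (C j)) atTop (𝓝 0))
    (hv : ∀ i, ∑ e with G.init e = i, G.r e ^ s * v (G.term e) ≤ v i)
    (hb : ∀ e, Real.log (G.r e) ≤ -b) {γ : List E} {i : V} {W : Set (Pt d)}
    (hγ : G.IsPathFrom i γ) (hW : IsOpen W) (hUW : U i ⊆ W)
    (hγW : G.pathMap γ '' KC (G.pathTerm i γ) ⊆ W) {κ : ℝ} (hκ : 0 < κ) (τ : ℝ) :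
    ∀ᶠ t in atTop, ∀ M ≥ 0,
      (∀ j, ∀ u ∈ Icc τ (t - b), layerCount s (KC j) (U j) u ≤ M * v j) →
      layerCount s (KC i) W t ≤
        M * (v i - G.pathRatio γ ^ s * v (G.pathTerm i γ)) + κ := by
  induction γ generalizing i W κ with
  | nil =>
    have hKCW : KC i ⊆ W := by simpa [pathMap, pathTerm] using hγW
    filter_upwards [eventually_layerCount_eq_zero (s := s) (hKC.1 i) hW hKCW] with t ht M _ _
    simpa [ht, pathRatio, pathTerm] using hκ.le
  | cons e γ ih =>
    obtain ⟨rfl, hγ⟩ := hγ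
    have hr : 0 < G.r e ^ s := Real.rpow_pos_of_pos (G.r_pos e) s
    have hshift (c : ℝ) : Tendsto (fun t : ℝ => t + c) atTop atTop :=
      tendsto_atTop_add_const_right _ c tendsto_id
    have htail := (hshift (Real.log (G.r e))).eventually <|
      ih hγ (hW.preimage (lipschitzWith_S e).continuous) (fun x hx => hUW (hU e hx))
        (by rwa [← image_subset_iff, ← image_comp]) (κ := κ / 2 / G.r e ^ s) (by positivity)
    have hlate : ∀ᶠ t in atTop, ∀ e', τ ≤ t + Real.log (G.r e') :=
      eventually_all.mpr fun e' => (hshift _).eventually_ge_atTop τ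
    filter_upwards [htail, hlate, (hF (G.init e)).eventually_lt_const (half_pos hκ)]
      with t htail hlate hCt M hM hlayer
    have htail' := htail M hM fun j u hu => hlayer j u
      ⟨hu.1, by linarith [hu.2, Real.log_neg (G.r_pos e) (G.r_lt_one e)]⟩
    calc layerCount s (KC (G.init e)) W t
        ≤ scaledCoveringNumber s (C (G.init e)) t +
            (M * (v (G.init e) - G.r e ^ s * v (G.term e)) + G.r e ^ s *
              layerCount s (KC (G.term e)) (G.S e ⁻¹' W) (t + Real.log (G.r e))) :=
          hKC.layerCount_init_le hU hv hM
            (fun e' => hlayer _ _ ⟨hlate e', by linarith [hb e']⟩) e hUW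
      _ ≤ κ / 2 + (M * (v (G.init e) - G.r e ^ s * v (G.term e)) + G.r e ^ s *
            (M * (v (G.term e) - G.pathRatio γ ^ s * v (G.pathTerm (G.term e) γ)) +
              κ / 2 / G.r e ^ s)) := by gcongr
      _ = M * (v (G.init e) - G.pathRatio (e :: γ) ^ s * v (G.pathTerm (G.init e) (e :: γ))) +
            κ := by
          rw [pathRatio_cons_rpow, pathTerm]
          field_simp
          ring

theorem IsInhomAttractor.exists_contraction (hKC : G.IsInhomAttractor C KC) (hK : G.IsAttractor K)
    (hUo : ∀ i, IsOpen (U i)) (hU : ∀ e, MapsTo (G.S e) (U (G.term e)) (U (G.init e)))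
    (hUK : ∀ i, (U i ∩ K i).Nonempty)
    (hF : ∀ j, Tendsto (scaledCoveringNumber s (C j)) atTop (𝓝 0))
    (hv0 : ∀ i, 0 < v i) (hv : ∀ i, ∑ e with G.init e = i, G.r e ^ s * v (G.term e) ≤ v i)
    (hb : ∀ e, Real.log (G.r e) ≤ -b) :
    ∃ θ ∈ Ioo (0 : ℝ) 1, ∀ κ > 0, ∀ τ, ∀ᶠ t in atTop, ∀ M ≥ 0,
      (∀ j, ∀ u ∈ Icc τ (t - b), layerCount s (KC j) (U j) u ≤ M * v j) →
      ∀ i, layerCount s (KC i) (U i) t ≤ (θ * M + κ) * v i := by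
  choose γ hγ hγU using fun i =>
    hK.exists_image_pathMap_subset (fun j => (hKC.1 j).isBounded) (hUo i) (hUK i)
  set m : V → ℝ := fun i => G.pathRatio (γ i) ^ s * v (G.pathTerm i (γ i))
  have hm (i : V) : 0 < m i := mul_pos (Real.rpow_pos_of_pos (pathRatio_pos _) s) (hv0 _)
  obtain ⟨θ, hθ, hmθ⟩ := exists_mem_Ioo_forall_le one_pos
    (f := fun i => (v i - m i) / v i) fun i => (div_lt_one (hv0 i)).mpr (by linarith [hm i])
  refine ⟨θ, hθ, fun κ hκ τ => ?_⟩
  have hlayer := eventually_all.mpr fun i => hKC.eventually_layerCount_le hU hF hv hb (hγ i)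
    (hUo i) subset_rfl (hγU i) (mul_pos hκ (hv0 i)) τ
  filter_upwards [hlayer] with t ht M hM hMt i
  calc layerCount s (KC i) (U i) t ≤ M * (v i - m i) + κ * v i := ht i M hM hMt
    _ ≤ M * (θ * v i) + κ * v i := by
      gcongr
      exact (div_le_iff₀ (hv0 i)).mp (hmθ i)
    _ = (θ * M + κ) * v i := by ring

theorem IsInhomAttractor.tendsto_layerCount (hKC : G.IsInhomAttractor C KC)
    (hSC : G.StronglyConnected) (hK : G.IsAttractor K) (hUo : ∀ i, IsOpen (U i))
    (hU : ∀ e, MapsTo (G.S e) (U (G.term e)) (U (G.init e))) (hUK : ∀ i, (U i ∩ K i).Nonempty)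
    (hρ : matrixSpectralRadius (G.Amatrix s) ≤ 1)
    (hF : ∀ j, Tendsto (scaledCoveringNumber s (C j)) atTop (𝓝 0)) (i : V) :
    Tendsto (layerCount s (KC i) (U i)) atTop (𝓝 0) := by
  obtain ⟨v, hv0, hv⟩ := hSC.exists_pos_subinvariant hρ
  obtain ⟨q, ⟨hq0, hq1⟩, hq⟩ := exists_mem_Ioo_forall_le one_pos G.r_lt_one
  obtain ⟨θ, ⟨hθ0, hθ1⟩, hrec⟩ := hKC.exists_contraction (b := -Real.log q) hK hUo hU hUK hF hv0 hv
    fun e => by simpa using Real.log_le_log (G.r_pos e) (hq e)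
  set f : ℝ → V → ℝ := fun t j => layerCount s (KC j) (U j) t / v j
  have hnorm {M : ℝ} (hM : 0 ≤ M) (t : ℝ) :
      ‖f t‖ ≤ M ↔ ∀ j, layerCount s (KC j) (U j) t ≤ M * v j := by
    simp only [pi_norm_le_iff_of_nonneg hM, f, norm_div, Real.norm_of_nonneg (layerCount_nonneg t),
      Real.norm_of_nonneg (hv0 _).le, div_le_iff₀ (hv0 _)]
  have hlim : Tendsto f atTop (𝓝 0) := by
    refine tendsto_zero_of_renewal hθ0.le hθ1 (neg_pos.mpr (Real.log_neg hq0 hq1)) ?_ ?_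
    · intro x y
      choose c hc using fun j => exists_scaledCoveringNumber_le_on_Icc s (hKC.1 j).isBounded x y
      obtain ⟨M, hM⟩ := Finite.bddAbove_range fun j => c j / v j
      refine ⟨max M 0, fun u hu => (hnorm (le_max_right M 0) u).mpr fun j => ?_⟩
      calc layerCount s (KC j) (U j) u ≤ c j :=
            (layerCount_le_scaledCoveringNumber (hKC.1 j).isBounded u).trans (hc j u hu)
        _ ≤ max M 0 * v j :=
            (div_le_iff₀ (hv0 j)).mp (le_max_of_le_left (hM (mem_range_self j)))
    · intro κ hκ τ
      filter_upwards [hrec κ hκ τ] with t ht M hM hMt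
      exact (hnorm (by positivity) t).mpr
        (ht M hM fun j u hu => (hnorm hM u).mp (hMt u hu) j)
  have := (tendsto_pi_nhds.mp hlim i).mul_const (v i)
  simpa [f, div_mul_cancel₀ _ (hv0 i).ne'] using this

end Renewal

end MWGraph

theorem scaledCoveringNumber_sub_diff_frontier_le {d : ℕ} {A W : Set (Pt d)} {s : ℝ}
    (hA : Bornology.IsBounded A) (hW : IsOpen W) (t : ℝ) :
    scaledCoveringNumber s A t -
      scaledCoveringNumber s (A \ cthickening (Real.exp (-t)) (frontier W)) t ≤
        layerCount s A W t := by
  set F := cthickening (Real.exp (-t)) (frontier W)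
  set L := cthickening (Real.exp (-t)) Wᶜ
  have hFL : F ⊆ L := cthickening_subset_of_subset _ <| by
    rw [← frontier_compl]
    exact hW.isClosed_compl.frontier_subset
  rw [sub_le_iff_le_add']
  calc scaledCoveringNumber s A t ≤ scaledCoveringNumber s (A \ F ∪ A ∩ L) t :=
        scaledCoveringNumber_mono t
          ((sdiff_union_inter A F).symm.subset.trans
            (union_subset_union_right _ (inter_subset_inter_right A hFL)))
          ((hA.subset sdiff_subset).union (hA.subset inter_subset_left))
    _ ≤ _ := scaledCoveringNumber_union_le t (hA.subset sdiff_subset) (hA.subset inter_subset_left)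

theorem stmt12_general {d : ℕ} {V E : Type} [Fintype V] [Fintype E] [DecidableEq V]
    {G : MWGraph d V E} (hSC : G.StronglyConnected) {C K KC U : V → Set (Pt d)}
    (hK : G.IsAttractor K) (hKC : G.IsInhomAttractor C KC) (hUo : ∀ i, IsOpen (U i))
    (hU : ∀ e, MapsTo (G.S e) (U (G.term e)) (U (G.init e))) (hUK : ∀ i, (U i ∩ K i).Nonempty)
    {s : ℝ} (hs : matrixSpectralRadius (G.Amatrix s) ≤ 1)
    (hC : ∀ i, Tendsto (fun t => Real.exp (-s * t) * (coveringNumber (C i) (Real.exp (-t)) : ℝ))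
      atTop (𝓝 0)) (i : V) :
    Tendsto (fun t : ℝ => Real.exp (-s * t) *
      ((coveringNumber (KC i) (Real.exp (-t)) : ℝ) -
        (coveringNumber (KC i \ Metric.cthickening (Real.exp (-t)) (frontier (U i)))
          (Real.exp (-t)) : ℝ))) atTop (𝓝 0) := by
  have hbdd : Bornology.IsBounded (KC i) := (hKC.1 i).isBounded
  simp only [mul_sub]
  exact squeeze_zero (fun t => sub_nonneg.mpr (scaledCoveringNumber_mono t sdiff_subset hbdd))
    (fun t => scaledCoveringNumber_sub_diff_frontier_le hbdd (hUo i) t)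
    (hKC.tendsto_layerCount hSC hK hUo hU hUK hs hC i)

theorem stmt12 {d : ℕ} {V E : Type} [Fintype V] [Fintype E] [DecidableEq V]
    (G : MWGraph d V E) (hSC : G.StronglyConnected)
    (C K KC U : V → Set (Pt d))
    (hC : G.IsCondensation C) (hK : G.IsAttractor K) (hKC : G.IsInhomAttractor C KC)
    (hU : G.IsOSCWith U) (hUK : ∀ i, (U i ∩ K i).Nonempty)
    (hCU : ∀ i, C i ⊆ closure (U i))
    (s0 : ℝ) (hs0 : IsS0 G s0)
    (hint : ∀ i : V, ∫⁻ t in Set.Ioi (0 : ℝ),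
      ENNReal.ofReal (Real.exp (-s0 * t) * (coveringNumber (C i) (Real.exp (-t)) : ℝ)) < ⊤)
 :
    ∀ i : V, Tendsto (fun t : ℝ => Real.exp (-s0 * t) *
      ((coveringNumber (KC i) (Real.exp (-t)) : ℝ) -
        (coveringNumber (KC i \ Metric.cthickening (Real.exp (-t)) (frontier (U i)))
          (Real.exp (-t)) : ℝ))) atTop (𝓝 0) := by
  have hmaps (e : E) : MapsTo (G.S e) (U (G.term e)) (U (G.init e)) := fun x hx =>
    hU.2.2.2.2.1 (G.init e) (mem_iUnion₂.mpr ⟨e, rfl, mem_image_of_mem _ hx⟩)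
  exact stmt12_general hSC hK hKC hU.2.1 hmaps hUK hs0.2.le fun i =>
    tendsto_scaledCoveringNumber_of_lintegral_lt_top (hC i).1.isBounded (hint i)
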